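/- Let c be the unique real number x > (√3+1)/2 satisfying 1/x + 20/(17x²) + 40/(17x²·(2x/(√3+1) − 1)) = 1 (so c ≈ 2.5404). Assume that (i) every instance of the chore division problem with two agents (arbitrary entitlements) admits a ((√3+1)/2)-WMMS assignment, and (ii) every instance with four agents and equal entitlements (1/4, 1/4, 1/4, 1/4) admits a (20/17)-MMS assignment. Then every instance of the asymmetric chore division problem with four agents admits a c-WMMS assignment. -/

import Mathlib

open Finset

/-- Cost of a bundle `S` of chores to agent `i`, given per-chore costs `V`. -/
noncomputable def costOf {n m : ℕ} (V : Fin n → Fin m → ℝ) (i : Fin n)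
    (S : Finset (Fin m)) : ℝ :=
  ∑ b ∈ S, V i b

/-- `A` is an `n`-partition of the chores: pairwise disjoint bundles whose union
is the set of all chores. -/
def IsPartition {n m : ℕ} (A : Fin n → Finset (Fin m)) : Prop :=
  (∀ j k, j ≠ k → Disjoint (A j) (A k)) ∧ Finset.univ.biUnion A = Finset.univ

/-- Weighted maximin share of agent `i` under entitlements `w`. -/
noncomputable def WMMS {n m : ℕ} (V : Fin n → Fin m → ℝ) (w : Fin n → ℝ)
    (i : Fin n) : ℝ :=
  sInf { x | ∃ A : Fin n → Finset (Fin m), IsPartition A ∧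
    x = ⨆ j, costOf V i (A j) * (w i / w j) }

/-- Unweighted maximin share of agent `i`. -/
noncomputable def MMS {n m : ℕ} (V : Fin n → Fin m → ℝ) (i : Fin n) : ℝ :=
  sInf { x | ∃ A : Fin n → Finset (Fin m), IsPartition A ∧
    x = ⨆ j, costOf V i (A j) }

/-- cost of the bundle `f⁻¹ j`. -/
noncomputable def cst {n m : ℕ} (v : Fin m → ℝ) (f : Fin m → Fin n) (j : Fin n) : ℝ :=
  ∑ b, if f b = j then v b else 0

lemma cst_nonneg {n m : ℕ} (v : Fin m → ℝ) (hv : ∀ b, 0 ≤ v b) (f : Fin m → Fin n) (j : Fin n) :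
    0 ≤ cst v f j := by
  unfold cst
  refine Finset.sum_nonneg fun b _ => ?_
  split_ifs
  · exact hv b
  · exact le_rfl

lemma cst_merge {n k m : ℕ} (v : Fin m → ℝ) (f : Fin m → Fin n) (h : Fin n → Fin k) (l : Fin k) :
    cst v (fun b => h (f b)) l = ∑ j, if h j = l then cst v f j else 0 := by
  unfold cst
  have : ∀ j, (if h j = l then ∑ b, (if f b = j then v b else 0) else 0)
      = ∑ b, if f b = j then (if h j = l then v b else 0) else 0 := by
    intro j
    split_ifs with hj
    · rfl
    · simp
  simp_rw [this]
  rw [Finset.sum_comm]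
  refine Finset.sum_congr rfl fun b _ => ?_
  simp

lemma part_of_fun {n m : ℕ} (f : Fin m → Fin n) :
    IsPartition (fun j => Finset.univ.filter (fun b => f b = j)) := by
  constructor
  · intro j k hjk
    rw [Finset.disjoint_left]
    intro b hb hb'
    simp at hb hb'
    exact hjk (hb ▸ hb')
  · ext b; simp

lemma fun_of_part {n m : ℕ} (A : Fin n → Finset (Fin m)) (hA : IsPartition A) :
    ∃ f : Fin m → Fin n, A = fun j => Finset.univ.filter (fun b => f b = j) := by
  have h : ∀ b, ∃ j, b ∈ A j := by
    intro b
    have : b ∈ Finset.univ.biUnion A := by rw [hA.2]; simp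
    simpa using this
  choose f hf using h
  refine ⟨f, ?_⟩
  funext j
  ext b
  simp only [Finset.mem_filter, Finset.mem_univ, true_and]
  constructor
  · intro hb
    by_contra hne
    exact Finset.disjoint_left.mp (hA.1 _ _ hne) (hf b) hb
  · rintro rfl; exact hf b

lemma costOf_fun {n m : ℕ} (V : Fin n → Fin m → ℝ) (i : Fin n) (f : Fin m → Fin n) (j : Fin n) :
    costOf V i (Finset.univ.filter (fun b => f b = j)) = cst (V i) f j := by
  unfold costOf cst
  rw [Finset.sum_filter]

lemma inf_attained {n m : ℕ} [NeZero n] (F : (Fin n → Finset (Fin m)) → ℝ) :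
    ∃ A, IsPartition A ∧ F A = sInf {x | ∃ A, IsPartition A ∧ x = F A} := by
  have hfin : Set.Finite {x | ∃ A, IsPartition A ∧ x = F A} := by
    refine (Set.finite_range F).subset ?_
    rintro x ⟨A, _, rfl⟩
    exact ⟨A, rfl⟩
  have hne : Set.Nonempty {x | ∃ A, IsPartition A ∧ x = F A} :=
    ⟨_, _, part_of_fun (fun _ => (0 : Fin n)), rfl⟩
  obtain ⟨A, hA, h⟩ := hne.csInf_mem hfin
  exact ⟨A, hA, h.symm⟩

lemma inf_le {n m : ℕ} (F : (Fin n → Finset (Fin m)) → ℝ) (A) (hA : IsPartition A) :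
    sInf {x | ∃ A, IsPartition A ∧ x = F A} ≤ F A := by
  have hfin : Set.Finite {x | ∃ A, IsPartition A ∧ x = F A} := by
    refine (Set.finite_range F).subset ?_
    rintro x ⟨A, _, rfl⟩
    exact ⟨A, rfl⟩
  exact csInf_le hfin.bddBelow ⟨A, hA, rfl⟩

lemma WMMS_attained {n m : ℕ} [NeZero n] (V : Fin n → Fin m → ℝ) (w : Fin n → ℝ)
    (i : Fin n) (hw : ∀ i, 0 < w i) :
    ∃ f : Fin m → Fin n, ∀ j, cst (V i) f j ≤ WMMS V w i * (w j / w i) := by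
  obtain ⟨A, hA, h⟩ := inf_attained (fun A : Fin n → Finset (Fin m) =>
    ⨆ j, costOf V i (A j) * (w i / w j))
  obtain ⟨f, rfl⟩ := fun_of_part A hA
  refine ⟨f, fun j => ?_⟩
  have h1 : cst (V i) f j * (w i / w j) ≤ WMMS V w i := by
    unfold WMMS
    rw [← h]
    simp only [costOf_fun]
    exact le_ciSup (f := fun j => cst (V i) f j * (w i / w j)) (Set.finite_range _).bddAbove j
  have hi := hw i
  have hj := hw j
  have h3 : cst (V i) f j = cst (V i) f j * (w i / w j) * (w j / w i) := by field_simp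
  rw [h3]
  exact mul_le_mul_of_nonneg_right h1 (by positivity)

lemma WMMS_le {n m : ℕ} [NeZero n] (V : Fin n → Fin m → ℝ) (w : Fin n → ℝ)
    (i : Fin n) (hw : ∀ i, 0 < w i) (x : ℝ) (f : Fin m → Fin n)
    (h : ∀ j, cst (V i) f j ≤ x * (w j / w i)) : WMMS V w i ≤ x := by
  refine (inf_le (fun A : Fin n → Finset (Fin m) =>
    ⨆ j, costOf V i (A j) * (w i / w j)) _ (part_of_fun f)).trans ?_
  refine ciSup_le fun j => ?_
  rw [costOf_fun]
  have hi := hw i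
  have hj := hw j
  have h3 : x = x * (w j / w i) * (w i / w j) := by field_simp
  rw [h3]
  exact mul_le_mul_of_nonneg_right (h j) (by positivity)

lemma MMS_le {n m : ℕ} [NeZero n] (V : Fin n → Fin m → ℝ)
    (i : Fin n) (x : ℝ) (f : Fin m → Fin n)
    (h : ∀ j, cst (V i) f j ≤ x) : MMS V i ≤ x := by
  refine (inf_le (fun A : Fin n → Finset (Fin m) =>
    ⨆ j, costOf V i (A j)) _ (part_of_fun f)).trans ?_
  refine ciSup_le fun j => ?_
  rw [costOf_fun]
  exact h j

lemma core (α c : ℝ) (hα : 0 < α) (hcα : α < c) (hc : 40 / 17 ≤ c)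
    (hc3 : 20 / 17 ≤ c * (c / α - 1))
    (hc2 : 1 / c + 20 / (17 * c ^ 2) + 40 / (17 * c ^ 2 * (c / α - 1)) = 1)
    {m : ℕ}
    (h2 : ∀ (V : Fin 2 → Fin m → ℝ) (w W : Fin 2 → ℝ),
      (∀ i b, 0 ≤ V i b) → (∀ i, 0 < w i) →
      (∀ i, ∃ f : Fin m → Fin 2, ∀ j, cst (V i) f j ≤ W i * (w j / w i)) →
      ∃ g : Fin m → Fin 2, ∀ i, cst (V i) g i ≤ α * W i)
    (h4 : ∀ (V : Fin 4 → Fin m → ℝ) (W : Fin 4 → ℝ), (∀ i b, 0 ≤ V i b) →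
      (∀ i, ∃ f : Fin m → Fin 4, ∀ j, cst (V i) f j ≤ W i) →
      ∃ g : Fin m → Fin 4, ∀ i, cst (V i) g i ≤ 20 / 17 * W i)
    (V : Fin 4 → Fin m → ℝ) (w W : Fin 4 → ℝ) (hV : ∀ i b, 0 ≤ V i b) (hw : ∀ i, 0 < w i)
    (hs : ∑ i, w i = 1) (hmono : Monotone w)
    (hf : ∀ i, ∃ f : Fin m → Fin 4, ∀ j, cst (V i) f j ≤ W i * (w j / w i)) :
    ∃ g : Fin m → Fin 4, ∀ i, cst (V i) g i ≤ c * W i := by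
  have hW : ∀ i, 0 ≤ W i := by
    intro i
    obtain ⟨f, h⟩ := hf i
    have h1 := h i
    rw [div_self (hw i).ne', mul_one] at h1
    exact (cst_nonneg _ (hV i) f i).trans h1
  have hc0 : 0 < c := hα.trans hcα
  have w0 := hw 0
  have w1 := hw 1
  have w2 := hw 2
  have w3 := hw 3
  have m01 : w 0 ≤ w 1 := hmono (by decide)
  have m12 : w 1 ≤ w 2 := hmono (by decide)
  have m23 : w 2 ≤ w 3 := hmono (by decide)
  have hw3 : ∀ j, w j ≤ w 3 := fun j => hmono (Fin.le_last j)
  rw [Fin.sum_univ_four] at hs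
  have hcW : ∀ i, 0 ≤ c * W i := fun i => mul_nonneg hc0.le (hW i)
  -- MMS bound
  have hM : ∀ i, ∃ f : Fin m → Fin 4, ∀ j, cst (V i) f j ≤ W i * (w 3 / w i) := by
    intro i
    obtain ⟨f, h⟩ := hf i
    refine ⟨f, fun j => (h j).trans ?_⟩
    have := hw i
    have := hw3 j
    exact mul_le_mul_of_nonneg_left (by gcongr) (hW i)
  set γ := c / α - 1 with hγ
  have hγ0 : 0 < γ := by
    rw [hγ, sub_pos, lt_div_iff₀ hα]; linarith
  have hαγ : α * (1 + γ) = c := by rw [hγ]; field_simp; ring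
  by_cases c1 : 1 ≤ c * w 3
  · refine ⟨fun _ => 3, fun i => ?_⟩
    by_cases hi : i = 3
    · subst hi
      obtain ⟨f, h⟩ := hf 3
      have e := cst_merge (V 3) f (fun _ => (3 : Fin 4)) 3
      rw [e]
      simp only [if_true, Fin.sum_univ_four]
      have e2 : W 3 * (w 0 / w 3) + W 3 * (w 1 / w 3) + W 3 * (w 2 / w 3) + W 3 * (w 3 / w 3)
          = 1 / w 3 * W 3 := by
        field_simp
        linear_combination W 3 * hs
      have e3 : 1 / w 3 * W 3 ≤ c * W 3 :=
        mul_le_mul_of_nonneg_right (by rw [div_le_iff₀ w3]; exact c1) (hW 3)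
      linarith [h 0, h 1, h 2, h 3]
    · refine le_trans (le_of_eq ?_) (hcW i)
      unfold cst
      simp [Ne.symm hi]
  push Not at c1
  by_cases c2 : 20 / 17 * w 3 ≤ c * w 0
  · obtain ⟨g, hg⟩ := h4 V (fun i => W i * (w 3 / w i)) hV hM
    refine ⟨g, fun i => (hg i).trans ?_⟩
    have hi := hw i
    have h0i : w 0 ≤ w i := hmono (Fin.zero_le i)
    have : 20 / 17 * (w 3 / w i) ≤ c := by
      rw [← mul_div_assoc, div_le_iff₀ hi]
      nlinarith
    have := mul_le_mul_of_nonneg_right this (hW i)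
    linarith
  push Not at c2
  by_cases c3 : w 1 ≤ w 3 * γ
  · have c4 : w 0 ≤ w 2 * γ := by
      have a1 : w 3 < 1 / c := by rw [lt_div_iff₀ hc0]; linarith
      have a2 : w 0 < 20 / (17 * c ^ 2) := by
        rw [lt_div_iff₀ (by positivity)]
        nlinarith
      have a3 : 40 / (17 * c ^ 2 * γ) = 2 * (20 / (17 * c ^ 2)) / γ := by
        field_simp; norm_num
      have a4 : 2 * (20 / (17 * c ^ 2)) / γ ≤ 2 * w 2 := by
        rw [← a3]; linarith
      rw [div_le_iff₀ hγ0] at a4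
      linarith
    obtain ⟨g, hg⟩ := h2 (fun i => V (![2, 3] i)) (fun i => w (![2, 3] i))
      (fun i => (1 + γ) * W (![2, 3] i)) (fun i b => hV _ b) (fun i => hw _) (by
        intro i
        have key : ∀ i, ∃ f : Fin m → Fin 2, ∀ j, cst (V i) f j ≤
            (1 + γ) * W i * (w (![2, 3] j) / w i) := by
          intro i
          obtain ⟨f, h⟩ := hf i
          have hi := hw i
          have hWi : 0 ≤ W i / w i := div_nonneg (hW i) hi.le
          refine ⟨fun b => (![0, 1, 0, 1] : Fin 4 → Fin 2) (f b), fun j => ?_⟩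
          rw [cst_merge]
          have t0 := h 0
          have t1 := h 1
          have t2 := h 2
          have t3 := h 3
          have b1 := mul_le_mul_of_nonneg_left c4 hWi
          have b2 := mul_le_mul_of_nonneg_left c3 hWi
          have sw : ∀ x, W i * (x / w i) = W i / w i * x := fun x => by ring
          rw [sw] at t0 t1 t2 t3
          have sw2 : ∀ x, (1 + γ) * W i * (x / w i) = W i / w i * x + W i / w i * (x * γ) :=
            fun x => by ring
          rw [sw2]
          fin_cases j
          · simp [Fin.sum_univ_four]
            linarith
          · simp [Fin.sum_univ_four]
            linarith
        exact key _)
    refine ⟨fun b => (![2, 3] : Fin 2 → Fin 4) (g b), fun i => ?_⟩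
    rw [cst_merge]
    have g0 := hg 0
    have g1 := hg 1
    simp at g0 g1
    rw [← mul_assoc, hαγ] at g0 g1
    fin_cases i
    · simpa [Fin.sum_univ_two] using hcW 0
    · simpa [Fin.sum_univ_two] using hcW 1
    · simpa [Fin.sum_univ_two] using g0
    · simpa [Fin.sum_univ_two] using g1
  push Not at c3
  have hr : ∀ i, w 1 ≤ w i → 20 / 17 * (W i * (w 3 / w i)) ≤ c * W i := by
    intro i h1i
    have hi := hw i
    have : 20 / 17 * (w 3 / w i) ≤ c := by
      rw [← mul_div_assoc, div_le_iff₀ hi]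
      have q1 := mul_le_mul_of_nonneg_left hc3 w3.le
      have q2 := mul_le_mul_of_nonneg_left (c3.le.trans h1i) hc0.le
      linarith
    have := mul_le_mul_of_nonneg_right this (hW i)
    linarith
  obtain ⟨g, hg⟩ := h4 (fun i => V (![3, 1, 2, 3] i))
    (fun i => W (![3, 1, 2, 3] i) * (w 3 / w (![3, 1, 2, 3] i))) (fun i b => hV _ b)
    (fun i => hM _)
  refine ⟨fun b => (![3, 1, 2, 3] : Fin 4 → Fin 4) (g b), fun i => ?_⟩
  rw [cst_merge]
  have g0 := hg 0
  have g1 := hg 1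
  have g2 := hg 2
  have g3 := hg 3
  simp only [Matrix.cons_val] at g0 g1 g2 g3
  rw [div_self w3.ne', mul_one] at g0 g3
  have r1 := hr 1 le_rfl
  have r2 := hr 2 m12
  have r3 := mul_le_mul_of_nonneg_right hc (hW 3)
  fin_cases i
  · simpa [Fin.sum_univ_four] using hcW 0
  · simp [Fin.sum_univ_four]; linarith
  · simp [Fin.sum_univ_four]; linarith
  · simp [Fin.sum_univ_four]; linarith

/-- Theorem for four agents: with `c > (√3+1)/2` satisfying
`1/c + 20/(17c²) + 40/(17c²(2c/(√3+1)−1)) = 1` (`c ≈ 2.5404`), assuming the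
two-agent `((√3+1)/2)`-WMMS guarantee and the symmetric four-agent `(20/17)`-MMS
guarantee, every four-agent instance admits a `c`-WMMS assignment. -/
theorem four_agent_WMMS (c : ℝ)
    (hc1 : (Real.sqrt 3 + 1) / 2 < c)
    (hc2 : 1 / c + 20 / (17 * c ^ 2) +
      40 / (17 * c ^ 2 * (2 * c / (Real.sqrt 3 + 1) - 1)) = 1)
    (h2 : ∀ (m : ℕ) (V : Fin 2 → Fin m → ℝ) (w : Fin 2 → ℝ),
      (∀ i b, 0 ≤ V i b) → (∀ i, 0 < w i) → (∀ i, w i ≤ 1) → (∑ i, w i = 1) →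
      ∃ S : Fin 2 → Finset (Fin m), IsPartition S ∧
        ∀ i, costOf V i (S i) ≤ (Real.sqrt 3 + 1) / 2 * WMMS V w i)
    (h4 : ∀ (m : ℕ) (V : Fin 4 → Fin m → ℝ), (∀ i b, 0 ≤ V i b) →
      ∃ S : Fin 4 → Finset (Fin m), IsPartition S ∧
        ∀ i, costOf V i (S i) ≤ (20 / 17) * MMS V i) :
    ∀ (m : ℕ) (V : Fin 4 → Fin m → ℝ) (w : Fin 4 → ℝ),
      (∀ i b, 0 ≤ V i b) → (∀ i, 0 < w i) → (∀ i, w i ≤ 1) → (∑ i, w i = 1) →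
      ∃ S : Fin 4 → Finset (Fin m), IsPartition S ∧
        ∀ i, costOf V i (S i) ≤ c * WMMS V w i := by
  intro m V w hV hw hw1 hs
  have s1 : (1.73 : ℝ) < √3 := by
    rw [Real.lt_sqrt (by norm_num)]; norm_num
  have s2 : √3 < (1.74 : ℝ) := by
    rw [Real.sqrt_lt' (by norm_num)]; norm_num
  set s := √3 with hsdef
  set α := (s + 1) / 2 with hαdef
  have hα : 0 < α := by rw [hαdef]; linarith
  have hα1 : 1.365 < α := by rw [hαdef]; linarith
  have hα2 : α < 1.37 := by rw [hαdef]; linarith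
  have hc0 : 0 < c := hα.trans hc1
  have e1 : 2 * c / (s + 1) = c / α := by
    rw [hαdef]; field_simp
  rw [e1] at hc2
  have hγ : 0 < c / α - 1 := by rw [sub_pos, lt_div_iff₀ hα]; linarith
  have hc : 40 / 17 ≤ c := by
    by_contra hlt
    push Not at hlt
    have t1 : (17 / 40 : ℝ) ≤ 1 / c := by
      rw [le_div_iff₀ hc0]; linarith
    have csq : c ^ 2 ≤ 1600 / 289 := by nlinarith
    have t2 : (0.2125 : ℝ) ≤ 20 / (17 * c ^ 2) := by
      rw [le_div_iff₀ (by positivity)]; linarith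
    have g1 : c / α - 1 ≤ 0.73 := by
      rw [sub_le_iff_le_add, div_le_iff₀ hα]; linarith
    have t3 : (0.5 : ℝ) ≤ 40 / (17 * c ^ 2 * (c / α - 1)) := by
      rw [le_div_iff₀ (by positivity)]
      have : c ^ 2 * (c / α - 1) ≤ 1600 / 289 * 0.73 :=
        mul_le_mul csq g1 hγ.le (by norm_num)
      linarith
    linarith
  have hc3 : 20 / 17 ≤ c * (c / α - 1) := by
    have g1 : 0.7 ≤ c / α - 1 := by
      rw [le_sub_iff_add_le, le_div_iff₀ hα]; linarith
    nlinarith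
  have h2' : ∀ (V : Fin 2 → Fin m → ℝ) (w W : Fin 2 → ℝ),
      (∀ i b, 0 ≤ V i b) → (∀ i, 0 < w i) →
      (∀ i, ∃ f : Fin m → Fin 2, ∀ j, cst (V i) f j ≤ W i * (w j / w i)) →
      ∃ g : Fin m → Fin 2, ∀ i, cst (V i) g i ≤ α * W i := by
    intro V w W hV hw hf
    have w0 := hw 0
    have w1 := hw 1
    have hpos : ∀ i, 0 < w i / (w 0 + w 1) := fun i => div_pos (hw i) (by linarith)
    obtain ⟨S, hS, h⟩ := h2 m V (fun i => w i / (w 0 + w 1)) hV hpos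
      (by
        intro i
        rw [div_le_one (by linarith)]
        fin_cases i
        · simp; linarith
        · simp; linarith)
      (by rw [Fin.sum_univ_two]; field_simp)
    obtain ⟨g, rfl⟩ := fun_of_part S hS
    refine ⟨g, fun i => ?_⟩
    have hi := h i
    rw [costOf_fun] at hi
    refine hi.trans (mul_le_mul_of_nonneg_left ?_ hα.le)
    obtain ⟨f, hf'⟩ := hf i
    refine WMMS_le V _ i hpos _ f fun j => ?_
    have : w j / (w 0 + w 1) / (w i / (w 0 + w 1)) = w j / w i := by
      have := hw i
      field_simp
    simp only [this]
    exact hf' j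
  have h4' : ∀ (V : Fin 4 → Fin m → ℝ) (W : Fin 4 → ℝ), (∀ i b, 0 ≤ V i b) →
      (∀ i, ∃ f : Fin m → Fin 4, ∀ j, cst (V i) f j ≤ W i) →
      ∃ g : Fin m → Fin 4, ∀ i, cst (V i) g i ≤ 20 / 17 * W i := by
    intro V W hV hf
    obtain ⟨S, hS, h⟩ := h4 m V hV
    obtain ⟨g, rfl⟩ := fun_of_part S hS
    refine ⟨g, fun i => ?_⟩
    have hi := h i
    rw [costOf_fun] at hi
    obtain ⟨f, hf'⟩ := hf i
    exact hi.trans (mul_le_mul_of_nonneg_left (MMS_le V i _ f hf') (by norm_num))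
  have hperm : ∀ (σ : Equiv.Perm (Fin 4)) (v : Fin m → ℝ) (f : Fin m → Fin 4) (j : Fin 4),
      cst v (fun b => σ (f b)) j = cst v f (σ.symm j) := by
    intro σ v f j
    unfold cst
    simp only [Equiv.eq_symm_apply]
  let σ := Tuple.sort w
  obtain ⟨g, hg⟩ := core α c hα hc1 hc hc3 hc2 h2' h4' (fun i => V (σ i)) (fun i => w (σ i))
    (fun i => WMMS V w (σ i)) (fun i b => hV _ b) (fun i => hw _)
    (by rw [← hs]; exact Equiv.sum_comp σ w) (Tuple.monotone_sort w)
    (by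
      intro i
      obtain ⟨f, hf⟩ := WMMS_attained V w (σ i) hw
      refine ⟨fun b => σ.symm (f b), fun j => ?_⟩
      rw [hperm]
      exact hf _)
  refine ⟨_, part_of_fun (fun b => σ (g b)), fun i => ?_⟩
  rw [costOf_fun, hperm]
  have := hg (σ.symm i)
  simpa using this
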